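/- In the quaternion algebra B = (13,10/ℚ), let s₂ = −(8/13)i − (3/13)k, s₂' = −(20/13)i − (1/2)j − (15/26)k, s₂'' = −(35/13)i − (1/2)j − (23/26)k, and s₃ = −1/2 − (31/26)i − (5/13)k. Then s₂² = −2, (s₂')² = −10, (s₂'')² = −5, (s₃ + 1/2)² = −3/4, s₃³ = 1, and there is a nonzero rational number c with s₂·s₂'·s₂''·s₃ = c·1. Consequently the images of these elements in B^×/ℚ^× satisfy the relations s₂² = s₂'² = s₂''² = s₃³ = s₂s₂'s₂''s₃ = 1, and ℚ(s₂) ≅ ℚ(√−2), ℚ(s₂') ≅ ℚ(√−10), ℚ(s₂'') ≅ ℚ(√−5), ℚ(s₃) ≅ ℚ(√−3). -/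

import Mathlib

/-!
The identities in the algebra are coordinate computations with `i² = 13`, `j² = 10`, `k² = -130`;
the product of the four generators is the scalar `10`.

For the fields: if an element `s` of a `ℚ`-algebra satisfies `s² = -d` with `d > 0`, evaluation at
`s` maps `ℚ[X]` onto `ℚ[s]`, and its kernel contains the ideal `(X² + d)`. That ideal is maximal,
since `X² + d` has no rational root, so it is the whole kernel and `ℚ[s] ≃ ℚ[X]/(X² + d)`
(`nonempty_adjoin_equiv`). For `s₃`, a primitive cube root of unity, this is applied to `2s₃ + 1`,
whose square is `-3` and which generates the same subalgebra.
-/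

open Quaternion Polynomial

theorem irreducible_X_sq_add_C {d : ℚ} (hd : 0 < d) : Irreducible (X ^ 2 + C d : ℚ[X]) := by
  have hdeg : (X ^ 2 + C d : ℚ[X]).natDegree = 2 := natDegree_X_pow_add_C
  refine (irreducible_iff_roots_eq_zero_of_degree_le_three (by omega) (by omega)).2 ?_
  refine Multiset.eq_zero_of_forall_notMem fun x hx => ?_
  have h := (mem_roots'.1 hx).2
  simp only [IsRoot.def, eval_add, eval_pow, eval_X, eval_C] at h
  nlinarith [sq_nonneg x]

/-- A square root of `-d`, for a positive rational `d`, generates a copy of `ℚ(√-d)` in any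
nontrivial `ℚ`-algebra, commutative or not. -/
theorem nonempty_adjoin_equiv {A : Type*} [Ring A] [Nontrivial A] [Algebra ℚ A] {d : ℚ}
    (hd : 0 < d) {s : A} (hs : s ^ 2 + algebraMap ℚ A d = 0) :
    Nonempty (Algebra.adjoin ℚ {s} ≃ₐ[ℚ] AdjoinRoot (X ^ 2 + C d : ℚ[X])) := by
  have hmax : (Ideal.span {(X ^ 2 + C d : ℚ[X])}).IsMaximal :=
    PrincipalIdealRing.isMaximal_of_irreducible (irreducible_X_sq_add_C hd)
  have hker : Ideal.span {(X ^ 2 + C d : ℚ[X])} = RingHom.ker (aeval (R := ℚ) s).rangeRestrict := by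
    refine hmax.eq_of_le (RingHom.ker_ne_top _) ?_
    rw [Ideal.span_singleton_le_iff_mem, RingHom.mem_ker]
    exact Subtype.ext (by simpa using hs)
  rw [Algebra.adjoin_singleton_eq_range_aeval]
  exact ⟨((Ideal.quotientEquivAlgOfEq ℚ hker).trans
    (Ideal.quotientKerAlgEquivOfSurjective
      (aeval (R := ℚ) s).rangeRestrict_surjective)).symm⟩

/-- In `B = (13,10/ℚ)`, the elements `s₂ = -(8/13)i - (3/13)k`,
`s₂' = -(20/13)i - (1/2)j - (15/26)k`, `s₂'' = -(35/13)i - (1/2)j - (23/26)k`,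
`s₃ = -1/2 - (31/26)i - (5/13)k` satisfy `s₂² = -2`, `(s₂')² = -10`, `(s₂'')² = -5`,
`(s₃ + 1/2)² = -3/4`, `s₃³ = 1` and `s₂·s₂'·s₂''·s₃ = c` for a nonzero rational `c`;
consequently their images in `B^×/ℚ^×` satisfy the stated relations and
`ℚ(s₂) ≅ ℚ(√-2)`, `ℚ(s₂') ≅ ℚ(√-10)`, `ℚ(s₂'') ≅ ℚ(√-5)`, `ℚ(s₃) ≅ ℚ(√-3)`. -/
theorem quadrilateral_group_generators_disc_ten :
    ∀ s₂ s₂' s₂'' s₃ : ℍ[ℚ, (13 : ℚ), (10 : ℚ)],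
      s₂ = ⟨0, -(8 / 13), 0, -(3 / 13)⟩ →
      s₂' = ⟨0, -(20 / 13), -(1 / 2), -(15 / 26)⟩ →
      s₂'' = ⟨0, -(35 / 13), -(1 / 2), -(23 / 26)⟩ →
      s₃ = ⟨-(1 / 2), -(31 / 26), 0, -(5 / 13)⟩ →
      s₂ ^ 2 = -2 ∧
      s₂' ^ 2 = -10 ∧
      s₂'' ^ 2 = -5 ∧
      (s₃ + algebraMap ℚ ℍ[ℚ, (13 : ℚ), (10 : ℚ)] (1 / 2)) ^ 2 =
        algebraMap ℚ ℍ[ℚ, (13 : ℚ), (10 : ℚ)] (-(3 / 4)) ∧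
      s₃ ^ 3 = 1 ∧
      (∃ c : ℚ, c ≠ 0 ∧
        s₂ * s₂' * s₂'' * s₃ = algebraMap ℚ ℍ[ℚ, (13 : ℚ), (10 : ℚ)] c) ∧
      Nonempty ((Algebra.adjoin ℚ {s₂}) ≃ₐ[ℚ] AdjoinRoot (X ^ 2 + 2 : ℚ[X])) ∧
      Nonempty ((Algebra.adjoin ℚ {s₂'}) ≃ₐ[ℚ] AdjoinRoot (X ^ 2 + 10 : ℚ[X])) ∧
      Nonempty ((Algebra.adjoin ℚ {s₂''}) ≃ₐ[ℚ] AdjoinRoot (X ^ 2 + 5 : ℚ[X])) ∧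
      Nonempty ((Algebra.adjoin ℚ {s₃}) ≃ₐ[ℚ] AdjoinRoot (X ^ 2 + 3 : ℚ[X])) := by
  rintro a b c e rfl rfl rfl rfl
  have h2 : (⟨0, -(8 / 13), 0, -(3 / 13)⟩ : ℍ[ℚ, (13 : ℚ), (10 : ℚ)]) ^ 2 = -2 := by
    ext <;> simp [pow_two] <;> norm_num <;> rfl
  have h10 : (⟨0, -(20 / 13), -(1 / 2), -(15 / 26)⟩ : ℍ[ℚ, (13 : ℚ), (10 : ℚ)]) ^ 2 = -10 := by
    ext <;> simp [pow_two] <;> norm_num <;> rfl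
  have h5 : (⟨0, -(35 / 13), -(1 / 2), -(23 / 26)⟩ : ℍ[ℚ, (13 : ℚ), (10 : ℚ)]) ^ 2 = -5 := by
    ext <;> simp [pow_two] <;> norm_num <;> rfl
  refine ⟨h2, h10, h5, ?_, ?_, ⟨10, by norm_num, ?_⟩, ?_, ?_, ?_, ?_⟩
  · ext <;> simp [pow_two, QuaternionAlgebra.algebraMap_eq] <;> norm_num
  · ext <;> simp [pow_succ] <;> norm_num
  · ext <;> simp [QuaternionAlgebra.algebraMap_eq] <;> norm_num
  · exact nonempty_adjoin_equiv (d := 2) (by norm_num) (by rw [h2]; simp)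
  · exact nonempty_adjoin_equiv (d := 10) (by norm_num) (by rw [h10]; simp)
  · exact nonempty_adjoin_equiv (d := 5) (by norm_num) (by rw [h5]; simp)
  · generalize hw : (⟨-(1 / 2), -(31 / 26), 0, -(5 / 13)⟩ : ℍ[ℚ, (13 : ℚ), (10 : ℚ)]) = w
    have hsq : ((2 : ℚ) • w + 1) ^ 2 + algebraMap ℚ ℍ[ℚ, (13 : ℚ), (10 : ℚ)] 3 = 0 := by
      subst hw
      ext <;> simp [pow_two, QuaternionAlgebra.algebraMap_eq] <;> norm_num
    have hadj : Algebra.adjoin ℚ {w} = Algebra.adjoin ℚ {(2 : ℚ) • w + 1} := by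
      apply le_antisymm <;> rw [Algebra.adjoin_le_iff, Set.singleton_subset_iff, SetLike.mem_coe]
      · have hmem := Subalgebra.smul_mem _ (sub_mem
          (Algebra.self_mem_adjoin_singleton ℚ ((2 : ℚ) • w + 1)) (one_mem _)) (1 / 2 : ℚ)
        simpa [smul_smul] using hmem
      · exact add_mem (Subalgebra.smul_mem _ (Algebra.self_mem_adjoin_singleton ℚ w) _) (one_mem _)
    rw [hadj]
    exact nonempty_adjoin_equiv (d := 3) (by norm_num) hsq
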